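/- arXiv:1004.3829 — 2 statements merged into one kernel-verified Lean document; each statement's English description precedes it below -/
import Mathlib

section
/- Let F be a field of characteristic 0, P = F[x,y,z], f ∈ P, and R = P/(f). Then the module of Kähler differentials Ω³_{R/F} is isomorphic as an R-module to R/(∂f/∂x, ∂f/∂y, ∂f/∂z). -/
open MvPolynomial

/-!
For vectors `v₁, …, vₙ` spanning a module `M`, the power `⋀ⁿ M` is generated by
`ω = v₁ ∧ ⋯ ∧ vₙ`, and the annihilator of `ω` is the ideal `I` generated by the coefficients of
the linear relations `∑ cⱼ vⱼ = 0`. Such coefficients kill `ω`, because replacing `vᵢ` by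
`∑ cⱼ vⱼ` in `ω` gives `cᵢ ω`. Nothing else does, because the coordinates of a vector of `M` with
respect to the `vⱼ` are well defined modulo `I`, so that the determinant of coordinates is an
alternating map `Mⁿ → R/I` taking the value `1` at `(v₁, …, vₙ)`.

For `M = Ω[S⁄R]` and `vⱼ = dxⱼ`, the conormal sequence says that the relations between the `vⱼ` are
`∑ (∂p/∂xⱼ) dxⱼ = 0` for `p` in the defining ideal of `S`, so that `I` is generated by the partial
derivatives of generators of that ideal.
-/

section ExteriorPower

variable {R M ι : Type*} [CommRing R] [AddCommGroup M] [Module R M]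

variable (R) in
/-- The ideal of `R` generated by the coefficients of all `R`-linear relations between the vectors
`v i`. If `v` is a family of `n` vectors spanning `M`, it is the `(n - 1)`-st Fitting ideal
of `M`. -/
def relationCoeffIdeal [Fintype ι] (v : ι → M) : Ideal R :=
  Ideal.span {r | ∃ (c : ι → R) (i : ι), ∑ j, c j • v j = 0 ∧ c i = r}

theorem coeff_mem_relationCoeffIdeal [Fintype ι] {v : ι → M} {c : ι → R}
    (hc : ∑ j, c j • v j = 0) (i : ι) : c i ∈ relationCoeffIdeal R v :=
  Ideal.subset_span ⟨c, i, hc, rfl⟩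

theorem exists_linearMap_comp_eq_of_ker_le {N P : Type*} [AddCommGroup N] [Module R N]
    [AddCommGroup P] [Module R P] {f : M →ₗ[R] N} (hf : Function.Surjective f) {g : M →ₗ[R] P}
    (h : f.ker ≤ g.ker) : ∃ φ : N →ₗ[R] P, φ ∘ₗ f = g := by
  refine ⟨f.ker.liftQ g h ∘ₗ (f.quotKerEquivOfSurjective hf).symm.toLinearMap,
    LinearMap.ext fun x ↦ ?_⟩
  have hx : (f.quotKerEquivOfSurjective hf).symm (f x) = f.ker.mkQ x := by
    rw [LinearEquiv.symm_apply_eq]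
    rfl
  simp [hx]

theorem exists_linearMap_apply_eq_single [Fintype ι] [DecidableEq ι] {v : ι → M}
    (hv : Submodule.span R (Set.range v) = ⊤) :
    ∃ φ : M →ₗ[R] ι → R ⧸ relationCoeffIdeal R v, ∀ i, φ (v i) = Pi.single i 1 := by
  let coordMod : (ι → R) →ₗ[R] ι → R ⧸ relationCoeffIdeal R v := (Algebra.linearMap R _).compLeft ι
  have hsurj : Function.Surjective (Fintype.linearCombination R v) :=
    LinearMap.range_eq_top.mp ((Fintype.range_linearCombination R v).trans hv)
  have hker : (Fintype.linearCombination R v).ker ≤ coordMod.ker := fun c hc ↦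
    funext fun i ↦ Ideal.Quotient.eq_zero_iff_mem.mpr (coeff_mem_relationCoeffIdeal hc i)
  obtain ⟨φ, hφ⟩ := exists_linearMap_comp_eq_of_ker_le hsurj hker
  refine ⟨φ, fun i ↦ ?_⟩
  calc
    φ (v i) = φ (Fintype.linearCombination R v (Pi.single i 1)) := by simp
    _ = coordMod (Pi.single i 1) := LinearMap.congr_fun hφ _
    _ = Pi.single i 1 := by
      ext j
      simp [coordMod, Pi.single_apply, apply_ite (Ideal.Quotient.mk _)]

/-- The determinant of the images of vectors under an `R`-linear map `φ : M → Aⁿ`, as an alternating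
map on `M` that is linear over `R`; `Matrix.detRowAlternating` is only linear over `A`. -/
def detAlternatingMap {A : Type*} [CommRing A] [Algebra R A] [Fintype ι] [DecidableEq ι]
    (φ : M →ₗ[R] ι → A) : M [⋀^ι]→ₗ[R] A :=
  MultilinearMap.alternatization
    ((MultilinearMap.mkPiAlgebra R ι A).compLinearMap fun i ↦ LinearMap.proj i ∘ₗ φ)

theorem detAlternatingMap_apply {A : Type*} [CommRing A] [Algebra R A] [Fintype ι]
    [DecidableEq ι] (φ : M →ₗ[R] ι → A) (m : ι → M) :
    detAlternatingMap φ m = (Matrix.of fun i ↦ φ (m i)).det := by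
  simp [detAlternatingMap, MultilinearMap.alternatization_apply, Matrix.det_apply]

theorem detAlternatingMap_eq_one {A : Type*} [CommRing A] [Algebra R A] [Fintype ι]
    [DecidableEq ι] {φ : M →ₗ[R] ι → A} {m : ι → M} (h : ∀ i, φ (m i) = Pi.single i 1) :
    detAlternatingMap φ m = 1 := by
  have hone : (Matrix.of fun i ↦ φ (m i)) = 1 := by
    ext i j
    simp [h, Pi.single_apply, Matrix.one_apply, eq_comm]
  rw [detAlternatingMap_apply, hone, Matrix.det_one]

variable {n : ℕ} {v : Fin n → M}

theorem span_singleton_ιMulti_eq_top (hv : Submodule.span R (Set.range v) = ⊤) :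
    Submodule.span R {exteriorPower.ιMulti R n v} = ⊤ := by
  rw [eq_top_iff, ← exteriorPower.ιMulti_family_span_of_span R hv, Submodule.span_le]
  rintro _ ⟨s, rfl⟩
  have hid : ⇑(Set.powersetCard.ofFinEmbEquiv.symm s) = id :=
    (OrderEmbedding.strictMono _).eq_id
  rw [exteriorPower.ιMulti_family, hid, Function.comp_id]
  exact Submodule.mem_span_singleton_self _

theorem smul_ιMulti_eq_zero_of_sum_smul_eq_zero {c : Fin n → R} (hc : ∑ j, c j • v j = 0)
    (i : Fin n) : c i • exteriorPower.ιMulti R n v = 0 := by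
  set ω := exteriorPower.ιMulti R n (M := M)
  calc
    c i • ω v = ∑ j, c j • ω (Function.update v i (v j)) := by
      rw [Finset.sum_eq_single_of_mem i (Finset.mem_univ i), Function.update_eq_self]
      intro j _ hji
      rw [ω.map_update_self v hji.symm, smul_zero]
    _ = ω (Function.update v i (∑ j, c j • v j)) := by
      simp only [AlternatingMap.map_update_sum, AlternatingMap.map_update_smul]
    _ = 0 := by rw [hc, ω.map_update_zero]

theorem torsionOf_ιMulti (hv : Submodule.span R (Set.range v) = ⊤) :
    Ideal.torsionOf R (⋀[R]^n M) (exteriorPower.ιMulti R n v) = relationCoeffIdeal R v := by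
  refine le_antisymm (fun r hr ↦ ?_) (Ideal.span_le.mpr ?_)
  · obtain ⟨φ, hφ⟩ := exists_linearMap_apply_eq_single hv
    let det := exteriorPower.alternatingMapLinearEquiv (detAlternatingMap φ)
    have hdet : det (exteriorPower.ιMulti R n v) = 1 := by
      rw [exteriorPower.alternatingMapLinearEquiv_apply_ιMulti, detAlternatingMap_eq_one hφ]
    refine Ideal.Quotient.eq_zero_iff_mem.mp ?_
    calc
      Ideal.Quotient.mk (relationCoeffIdeal R v) r = r • det (exteriorPower.ιMulti R n v) := by
        rw [hdet, Algebra.smul_def, mul_one, Ideal.Quotient.algebraMap_eq]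
      _ = 0 := by rw [← map_smul, (Ideal.mem_torsionOf_iff _ r).mp hr, map_zero]
  · rintro _ ⟨c, i, hc, rfl⟩
    exact smul_ιMulti_eq_zero_of_sum_smul_eq_zero hc i

/-- The `n`-th exterior power of a module spanned by `n` vectors is cyclic; the isomorphism sends
`v 0 ∧ ⋯ ∧ v (n - 1)` to `1`. -/
noncomputable def exteriorPowerEquivQuotient (hv : Submodule.span R (Set.range v) = ⊤) :
    (⋀[R]^n M) ≃ₗ[R] R ⧸ relationCoeffIdeal R v :=
  .symm <| (Submodule.quotEquivOfEq _ _ (torsionOf_ιMulti hv).symm).trans <|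
    (Ideal.quotTorsionOfEquivSpanSingleton R _ (exteriorPower.ιMulti R n v)).trans <|
    (LinearEquiv.ofEq _ _ (span_singleton_ιMulti_eq_top hv)).trans Submodule.topEquiv

end ExteriorPower

section Kaehler

open Algebra KaehlerDifferential

variable {R S ι σ : Type*} [CommRing R] [CommRing S] [Algebra R S]

theorem span_range_D_val_eq_top (G : Generators R S ι) :
    Submodule.span S (Set.range fun i ↦ D R S (G.val i)) = ⊤ := by
  let π := G.toExtension.toKaehler
  have hπ : π ∘ G.cotangentSpaceBasis = fun i ↦ D R S (G.val i) :=
    funext G.toKaehler_cotangentSpaceBasis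
  rw [← hπ, Set.range_comp, ← Submodule.map_span, G.cotangentSpaceBasis.span_eq,
    Submodule.map_top, LinearMap.range_eq_top.mpr G.toExtension.toKaehler_surjective]

theorem cotangentComplex_mk_eq_sum_iff [Fintype ι] (G : Generators R S ι)
    (p : G.toExtension.ker) (c : ι → S) :
    G.toExtension.cotangentComplex (.mk p) = ∑ i, c i • G.cotangentSpaceBasis i ↔
      ∀ i, aeval G.val (pderiv i p.1) = c i := by
  rw [← G.cotangentSpaceBasis.repr.injective.eq_iff, Finsupp.ext_iff]
  refine forall_congr' fun i ↦ ?_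
  rw [Extension.cotangentComplex_mk, Module.Basis.repr_sum_self]
  exact Eq.congr_left (G.cotangentSpaceBasis_repr_one_tmul p.1 i)

theorem sum_smul_D_val_eq_zero_iff [Fintype ι] (G : Generators R S ι) (c : ι → S) :
    ∑ i, c i • D R S (G.val i) = 0 ↔ ∃ p ∈ G.ker, ∀ i, aeval G.val (pderiv i p) = c i := by
  have hsum : ∑ i, c i • D R S (G.val i) =
      G.toExtension.toKaehler (∑ i, c i • G.cotangentSpaceBasis i) := by simp
  rw [hsum, G.toExtension.exact_cotangentComplex_toKaehler, Set.mem_range,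
    Extension.Cotangent.mk_surjective.exists]
  exact (exists_congr fun p ↦ cotangentComplex_mk_eq_sum_iff G p c).trans
    (by simp only [Subtype.exists, exists_prop]; rfl)

/-- The ideal of `S` generated by the entries of the Jacobian matrix of a presentation of `S`, that
is, by the partial derivatives of the relations. For a hypersurface it is the classical Jacobian
ideal. -/
def jacobianEntryIdeal (P : Presentation R S ι σ) : Ideal S :=
  Ideal.span (Set.range fun x : σ × ι ↦ aeval P.val (pderiv x.2 (P.relation x.1)))

theorem aeval_pderiv_mem_jacobianEntryIdeal (P : Presentation R S ι σ) {p : MvPolynomial ι R}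
    (hp : p ∈ P.ker) (i : ι) : aeval P.val (pderiv i p) ∈ jacobianEntryIdeal P := by
  rw [← P.span_range_relation_eq_ker] at hp
  induction hp using Submodule.span_induction with
  | mem _ h =>
    obtain ⟨j, rfl⟩ := h
    exact Ideal.subset_span ⟨(j, i), rfl⟩
  | zero => simp
  | add p q _ _ hp hq => simpa using add_mem hp hq
  | smul a p hp hpJ =>
    have hp0 : aeval P.val p = 0 := by
      have hker : p ∈ P.ker := P.span_range_relation_eq_ker.le hp
      rwa [P.ker_eq_ker_aeval_val, RingHom.mem_ker] at hker
    simpa [pderiv_mul, hp0] using Ideal.mul_mem_left _ (aeval P.val a) hpJ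

theorem relationCoeffIdeal_D_val [Fintype ι] (P : Presentation R S ι σ) :
    relationCoeffIdeal S (fun i ↦ D R S (P.val i)) = jacobianEntryIdeal P := by
  refine le_antisymm (Ideal.span_le.mpr ?_) (Ideal.span_le.mpr ?_)
  · rintro _ ⟨c, i, hc, rfl⟩
    obtain ⟨p, hp, hpc⟩ := (sum_smul_D_val_eq_zero_iff P.toGenerators c).mp hc
    exact hpc i ▸ aeval_pderiv_mem_jacobianEntryIdeal P hp i
  · rintro _ ⟨⟨j, i⟩, rfl⟩
    exact coeff_mem_relationCoeffIdeal ((sum_smul_D_val_eq_zero_iff P.toGenerators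
      fun i ↦ aeval P.val (pderiv i (P.relation j))).mpr
        ⟨P.relation j, P.relation_mem_ker j, fun _ ↦ rfl⟩) i

/-- The presentation of the coordinate ring of the hypersurface `f = 0` in affine space by the
single relation `f`. -/
noncomputable def hypersurfacePresentation (f : MvPolynomial ι R) :
    Presentation R (MvPolynomial ι R ⧸ Ideal.span {f}) ι Unit where
  toGenerators := Generators.naive
  relation _ := f
  span_range_relation_eq_ker := by rw [Set.range_const, Generators.ker_naive]

theorem jacobianEntryIdeal_hypersurfacePresentation (f : MvPolynomial ι R) :
    jacobianEntryIdeal (hypersurfacePresentation f) =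
      Ideal.span (Set.range fun i ↦ Ideal.Quotient.mk (Ideal.span {f}) (pderiv i f)) := by
  have haeval : aeval (hypersurfacePresentation f).val = Ideal.Quotient.mkₐ R (Ideal.span {f}) :=
    algHom_ext fun i ↦ aeval_X _ i
  have hrange : (Set.range fun x : Unit × ι ↦
      aeval (hypersurfacePresentation f).val (pderiv x.2 f)) =
      Set.range fun i ↦ Ideal.Quotient.mk (Ideal.span {f}) (pderiv i f) := by
    ext
    simp [haeval]
  exact congrArg Ideal.span hrange

theorem omega3_iso_jacobian_quotient_general {n : ℕ} (P : Presentation R S (Fin n) σ) :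
    Nonempty ((⋀[S]^n (Ω[S⁄R])) ≃ₗ[S] S ⧸ jacobianEntryIdeal P) :=
  relationCoeffIdeal_D_val P ▸ ⟨exteriorPowerEquivQuotient (span_range_D_val_eq_top P.toGenerators)⟩

end Kaehler

theorem range_fin_three {α : Type*} (g : Fin 3 → α) : Set.range g = {g 0, g 1, g 2} := by
  simp [Fin.range_fin_succ, Fin.tail]

/-- Let `F` be a field of characteristic zero, `P = F[x,y,z]`, `f ∈ P` and `R = P/(f)`.
Then `Ω³_{R/F}` is isomorphic as an `R`-module to `R/(∂f/∂x, ∂f/∂y, ∂f/∂z)`. -/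
theorem omega3_iso_jacobian_quotient (F : Type) [Field F] [CharZero F]
    (f : MvPolynomial (Fin 3) F) :
    letI P := MvPolynomial (Fin 3) F
    letI R := P ⧸ Ideal.span {f}
    letI π : P →+* R := Ideal.Quotient.mk (Ideal.span {f})
    Nonempty ((⋀[R]^3 (Ω[R⁄F])) ≃ₗ[R]
      (R ⧸ Ideal.span {π (pderiv 0 f), π (pderiv 1 f), π (pderiv 2 f)})) := by
  have hJ := jacobianEntryIdeal_hypersurfacePresentation f
  rw [range_fin_three] at hJ
  exact hJ ▸ omega3_iso_jacobian_quotient_general (hypersurfacePresentation f)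
end

section
/- Let F be a field of characteristic 0 and R = F[x,y,z]/(f) a 2-dimensional isolated hypersurface singularity with Tjurina number τ. Then the torsion submodule of Ω²_{R/F} is isomorphic to Ext¹_R(Ω²_{R/F}, R), and both have length τ. -/
open MvPolynomial CategoryTheory Opposite

/-- The length of a module, defined as the Krull dimension of its submodule lattice. -/
noncomputable def moduleLength (R M : Type) [CommRing R] [AddCommGroup M] [Module R M] :
    WithBot ℕ∞ :=
  Order.krullDim (Submodule R M)

/-!
Since `Ω¹` is the quotient of `R³` by the gradient `g` of `f`, its exterior square is the cokernel
of `g ⨯₃ · : R³ → R³`. Some linear change of coordinates makes two of the entries `a, b, c` of `g`,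
say `a, b`, a regular sequence: `R` is a two-dimensional Cohen–Macaulay ring and the Jacobian
ideal `J = (a, b, c)` has finite colength. The Koszul complex `R → R³ → R³ → R` of `g` is then exact
except in the last two places, so its first three terms resolve `Ω²`. Dualising this resolution
gives the last three terms, whose cohomology is `H²`, while the torsion of `Ω²` is the kernel of
the map `g ⬝ᵥ · : R³ / im (g ⨯₃ ·) → R`, again `H²`. Finally `H²` is the kernel of `c` on the finite
length module `R ⧸ (a, b)`, which has the same length as the cokernel `R ⧸ J`.
-/

section PrimeAvoidance

variable {R : Type*} [CommRing R]

theorem exists_add_mul_notMem_of_isPrime {S : Set (Ideal R)} (hS : S.Finite)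
    (hprime : ∀ q ∈ S, q.IsPrime) {b c : R} (hbc : ∀ q ∈ S, b ∈ q → c ∉ q) :
    ∃ t, ∀ q ∈ S, b + t * c ∉ q := by
  classical
  let T : Set (Ideal R) := {q | Maximal (· ∈ S) q}
  have hT : T.Finite := hS.subset fun q hq => hq.prop
  let A : Finset (Ideal R) := {q ∈ hT.toFinset | b ∉ q}
  let B : Set (Ideal R) := {q ∈ T | b ∈ q}
  -- Take `t` in the members of `T` that do not contain `b` and outside those that do.
  obtain ⟨t, htA, htB⟩ : ∃ t ∈ A.inf id, t ∉ ⋃ q ∈ B, (q : Set R) := by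
    by_contra! h
    obtain ⟨q, hq, hle⟩ := (Ideal.subset_union_prime_finite (hT.subset fun _ hq => hq.1)
      (f := id) ⊥ ⊥ fun q hq _ _ => hprime q hq.1.prop).1 h
    obtain ⟨p, hp, hpq⟩ := (hprime q hq.1.prop).inf_le'.1 hle
    obtain ⟨hpT, hbp⟩ := Finset.mem_filter.1 hp
    have hpq : p = q := (hT.mem_toFinset.1 hpT).eq_of_le hq.1.prop hpq
    exact hbp (hpq ▸ hq.2)
  refine ⟨t, fun q hq hmem => ?_⟩
  obtain ⟨m, hqm, hm⟩ := hS.exists_le_maximal hq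
  have hmem : b + t * c ∈ m := hqm hmem
  by_cases hb : b ∈ m
  · have htm : t ∉ m := fun ht => htB (Set.mem_biUnion (show m ∈ B from ⟨hm, hb⟩) ht)
    exact ((hprime m hm.prop).mem_or_mem ((m.add_mem_iff_right hb).1 hmem)).elim htm
      (hbc m hm.prop hb)
  · have htm : t ∈ m := Finset.inf_le (f := id)
      (Finset.mem_filter.2 ⟨hT.mem_toFinset.2 hm, hb⟩) htA
    exact hb ((m.add_mem_iff_left (m.mul_mem_right c htm)).1 hmem)

theorem exists_isSMulRegular_add_mul [IsNoetherianRing R] (M : Type*) [AddCommGroup M]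
    [Module R M] [Module.Finite R M] {b c : R}
    (hbc : ∀ q ∈ associatedPrimes R M, b ∈ q → c ∉ q) :
    ∃ t, IsSMulRegular M (b + t * c) := by
  obtain ⟨t, ht⟩ := exists_add_mul_notMem_of_isPrime (associatedPrimes.finite R M)
    (fun _ hq => hq.isPrime) hbc
  refine ⟨t, not_not.1 fun h => ?_⟩
  have hmem : b + t * c ∈ ⋃ q ∈ associatedPrimes R M, (q : Set R) := by
    rwa [biUnion_associatedPrimes_eq_compl_regular]
  obtain ⟨q, hq, hqt⟩ := Set.mem_iUnion₂.1 hmem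
  exact ht q hq hqt

end PrimeAvoidance

section FiniteLength

variable {R : Type*} [CommRing R]

theorem krullDimLE_quotient_span_singleton {n : ℕ} [h : Ring.KrullDimLE (n + 1) R] {r : R}
    (hr : r ∈ nonZeroDivisors R) : Ring.KrullDimLE n (R ⧸ Ideal.span {r}) := by
  rw [Ring.krullDimLE_iff] at h ⊢
  have hle := (ringKrullDim_quotient_succ_le_of_nonZeroDivisor hr).trans h
  rw [Nat.cast_succ] at hle
  exact ENat.WithBot.add_le_add_one_right_iff.1 hle

theorem krullDimLE_of_surjective {S : Type*} [CommRing S] {n : ℕ} [h : Ring.KrullDimLE n R]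
    (φ : R →+* S) (hφ : Function.Surjective φ) : Ring.KrullDimLE n S := by
  rw [Ring.krullDimLE_iff] at h ⊢
  exact (ringKrullDim_le_of_surjective φ hφ).trans h

theorem isFiniteLength_quotient_of_krullDimLE_zero [IsNoetherianRing R] (I : Ideal R)
    [Ring.KrullDimLE 0 (R ⧸ I)] : IsFiniteLength R (R ⧸ I) := by
  have : IsArtinianRing (R ⧸ I) := isArtinianRing_iff_krullDimLE_zero.2 inferInstance
  have : IsArtinian R (R ⧸ I) :=
    isArtinian_of_surjective_algebraMap (R := R ⧸ I) Ideal.Quotient.mk_surjective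
  exact isFiniteLength_iff_isNoetherian_isArtinian.2 ⟨inferInstance, this⟩

theorem isFiniteLength_quotient_span_pair [IsNoetherianRing R] [Ring.KrullDimLE 2 R] {a b : R}
    (ha : a ∈ nonZeroDivisors R) (hb : IsSMulRegular (R ⧸ Ideal.span {a}) b) :
    IsFiniteLength R (R ⧸ Ideal.span {a, b}) := by
  have hb : Ideal.Quotient.mk (Ideal.span {a}) b ∈ nonZeroDivisors (R ⧸ Ideal.span {a}) :=
    mem_nonZeroDivisors_iff_right.2 fun x hx =>
      hb.right_eq_zero_of_smul (by rwa [Algebra.smul_def, mul_comm])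
  have : Ring.KrullDimLE 1 (R ⧸ Ideal.span {a}) := krullDimLE_quotient_span_singleton ha
  have := krullDimLE_quotient_span_singleton (n := 0) hb
  rw [← Set.image_singleton, ← Ideal.map_span] at this
  rw [Ideal.span_insert]
  have := krullDimLE_of_surjective (n := 0) _
    (DoubleQuot.quotQuotEquivQuotSup (Ideal.span {a}) (Ideal.span {b})).surjective
  exact isFiniteLength_quotient_of_krullDimLE_zero _

theorem isMaximal_of_isFiniteLength_quotient {J q : Ideal R} [q.IsPrime]
    (hJ : IsFiniteLength R (R ⧸ J)) (hq : J ≤ q) : q.IsMaximal := by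
  have : IsArtinian R (R ⧸ q) :=
    (isFiniteLength_iff_isNoetherian_isArtinian.1
      (hJ.of_surjective (Submodule.factor_surjective hq))).2
  have : IsArtinianRing (R ⧸ q) := isArtinian_of_tower R this
  exact Ideal.Quotient.maximal_of_isField _ (IsArtinianRing.isField_of_isDomain _)

end FiniteLength

section Colon

variable {A : Type*} [CommRing A] {m I : Ideal A}

theorem colon_le_of_isSMulRegular {c : A} (hc : c ∈ m) (hreg : IsSMulRegular (A ⧸ I) c) :
    I.colon (m : Set A) ≤ I := fun u hu =>
  (isSMulRegular_quotient_iff_mem_of_smul_mem I c).1 hreg u <| by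
    rw [smul_eq_mul, mul_comm]
    exact Submodule.mem_colon.1 hu c hc

-- For `a, c ∈ m` both colon conditions say that `Ext¹(A ⧸ m, A ⧸ I) = 0`.
theorem colon_sup_span_singleton_le {a c : A} (hc : c ∈ m)
    (ha : IsSMulRegular (A ⧸ I) a) (hcreg : IsSMulRegular (A ⧸ I) c)
    (h : (I ⊔ Ideal.span {c}).colon (m : Set A) ≤ I ⊔ Ideal.span {c}) :
    (I ⊔ Ideal.span {a}).colon (m : Set A) ≤ I ⊔ Ideal.span {a} := by
  simp only [isSMulRegular_quotient_iff_mem_of_smul_mem, smul_eq_mul] at ha hcreg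
  intro u hu
  simp only [Submodule.mem_colon, SetLike.le_def, SetLike.mem_coe, smul_eq_mul, Submodule.mem_sup,
    Ideal.mem_span_singleton'] at hu h ⊢
  obtain ⟨k, hk, _, ⟨v, rfl⟩, hv⟩ := hu c hc
  obtain ⟨k₂, hk₂, _, ⟨w₂, rfl⟩, hw₂⟩ := h (x := v) fun t ht => by
    obtain ⟨k₁, hk₁, _, ⟨w, rfl⟩, hw⟩ := hu t ht
    have hmul : a * (v * t - w * c) = c * k₁ - t * k := by
      linear_combination t * hv - c * hw
    exact ⟨v * t - w * c, ha _ (hmul ▸ I.sub_mem (I.mul_mem_left _ hk₁) (I.mul_mem_left _ hk)),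
      w * c, ⟨w, rfl⟩, by ring⟩
  have hmul : c * (u - w₂ * a) = k + a * k₂ := by linear_combination -hv - a * hw₂
  exact ⟨u - w₂ * a, hcreg _ (hmul ▸ I.add_mem hk (I.mul_mem_left _ hk₂)), w₂ * a, ⟨w₂, rfl⟩,
    by ring⟩

theorem notMem_associatedPrimes_of_colon_le [IsNoetherianRing A]
    (h : I.colon (m : Set A) ≤ I) : m ∉ associatedPrimes A (A ⧸ I) := by
  intro hm
  obtain ⟨hprime, x, hx⟩ := Submodule.isAssociatedPrime_iff.1 hm
  obtain ⟨u, rfl⟩ := Ideal.Quotient.mk_surjective x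
  have hu : u ∈ I := h <| Submodule.mem_colon.2 fun t ht => by
    rw [SetLike.mem_coe, hx, Submodule.mem_colon_singleton, Submodule.mem_bot] at ht
    rw [smul_eq_mul, mul_comm, ← Ideal.Quotient.eq_zero_iff_mem, map_mul]
    simpa only [Algebra.smul_def, Ideal.Quotient.algebraMap_eq] using ht
  refine hprime.ne_top ((Ideal.eq_top_iff_one _).2 ?_)
  rw [hx, Submodule.mem_colon_singleton, one_smul, Submodule.mem_bot]
  exact Ideal.Quotient.eq_zero_iff_mem.2 hu

theorem isSMulRegular_quotient_span_singleton [IsDomain A] [DecompositionMonoid A] {a b : A}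
    (h : IsRelPrime a b) : IsSMulRegular (A ⧸ Ideal.span {a}) b :=
  (isSMulRegular_quotient_iff_mem_of_smul_mem _ _).2 fun x hx => by
    rw [Ideal.mem_span_singleton] at hx ⊢
    exact h.dvd_of_dvd_mul_left hx

theorem isSMulRegular_quotient_map_C (I : Ideal A) {p : Polynomial A} (hp : p.Monic) :
    IsSMulRegular (Polynomial A ⧸ I.map Polynomial.C) p := by
  have mem_iff (q : Polynomial A) :
      q ∈ I.map Polynomial.C ↔ q.map (Ideal.Quotient.mk I) = 0 := by
    rw [← Polynomial.coe_mapRingHom, ← RingHom.mem_ker, Polynomial.ker_mapRingHom, Ideal.mk_ker]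
  refine (isSMulRegular_quotient_iff_mem_of_smul_mem _ _).2 fun q hq => ?_
  rwa [mem_iff, smul_eq_mul, Polynomial.map_mul, (hp.map _).mul_right_eq_zero_iff,
    ← mem_iff] at hq

theorem finSuccEquiv_rename_succ {n : ℕ} (q : MvPolynomial (Fin n) A) :
    finSuccEquiv A n (rename Fin.succ q) = Polynomial.C q := by
  have h : (finSuccEquiv A n).toAlgHom.comp (rename Fin.succ) = Polynomial.CAlgHom := by
    ext1 i
    simp [finSuccEquiv_X_succ]
  exact DFunLike.congr_fun h q

theorem finSuccEquiv_toMvPolynomial_zero {n : ℕ} (p : Polynomial A) :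
    finSuccEquiv A n (p.toMvPolynomial 0) = p.map (algebraMap A (MvPolynomial (Fin n) A)) := by
  have h : (finSuccEquiv A n).toAlgHom.comp (Polynomial.toMvPolynomial 0) =
      Polynomial.mapAlgHom (Algebra.ofId A _) := by
    ext1
    simp [finSuccEquiv_X_zero]
  exact DFunLike.congr_fun h p

theorem isSMulRegular_quotient_map_rename_succ {n : ℕ} (K : Ideal (MvPolynomial (Fin n) A))
    {p : Polynomial A} (hp : p.Monic) :
    IsSMulRegular (MvPolynomial (Fin (n + 1)) A ⧸ K.map (rename (R := A) Fin.succ))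
      (p.toMvPolynomial (0 : Fin (n + 1))) := by
  set E := finSuccEquiv A n
  have mem_iff (q : MvPolynomial (Fin (n + 1)) A) :
      q ∈ K.map (rename (R := A) Fin.succ) ↔ E q ∈ K.map Polynomial.C := by
    have hK : (K.map (rename (R := A) Fin.succ)).map E = K.map Polynomial.C := by
      refine (Ideal.map_span E _).trans ?_
      simp only [Set.image_image, E, finSuccEquiv_rename_succ]
      rfl
    rw [← hK, Ideal.mem_map_of_equiv]
    exact ⟨fun hq => ⟨q, hq, rfl⟩, fun ⟨x, hx, hxq⟩ => E.injective hxq ▸ hx⟩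
  refine (isSMulRegular_quotient_iff_mem_of_smul_mem _ _).2 fun q hq => ?_
  rw [mem_iff, smul_eq_mul, map_mul, finSuccEquiv_toMvPolynomial_zero] at hq
  exact (mem_iff q).2 <| (isSMulRegular_quotient_iff_mem_of_smul_mem _ _).1
    (isSMulRegular_quotient_map_C K (hp.map _)) _ hq

end Colon

section PolynomialRing

variable {F : Type*} [Field F]

theorem vars_subset_of_dvd {σ A : Type*} [CommRing A] [IsDomain A] {d p : MvPolynomial σ A}
    (hp : p ≠ 0) (hd : d ∣ p) : d.vars ⊆ p.vars := by
  obtain ⟨c, rfl⟩ := hd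
  intro i hi
  rw [mem_vars_iff_degreeOf_ne_zero] at hi ⊢
  rw [degreeOf_mul_eq (left_ne_zero_of_mul hp) (right_ne_zero_of_mul hp)]
  exact fun h => hi (Nat.add_eq_zero_iff.1 h).1

theorem isRelPrime_toMvPolynomial {σ : Type*} {i j : σ} (hij : i ≠ j)
    {p q : Polynomial F} (hp : p ≠ 0) (hq : q ≠ 0) :
    IsRelPrime (p.toMvPolynomial i) (q.toMvPolynomial j) := by
  classical
  have vars_subset (k : σ) {r : Polynomial F} (hr : r ≠ 0) {d : MvPolynomial σ F}
      (hd : d ∣ r.toMvPolynomial k) : d.vars ⊆ {k} := by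
    have hr' : r.toMvPolynomial k ≠ 0 :=
      (map_ne_zero_iff _ (Polynomial.toMvPolynomial_injective k)).2 hr
    refine (vars_subset_of_dvd hr' hd).trans ?_
    rw [Polynomial.toMvPolynomial_eq_rename_comp, AlgHom.comp_apply]
    exact (vars_rename _ _).trans
      (Finset.image_subset_iff.2 fun _ _ => Finset.mem_singleton_self _)
  intro d hdp hdq
  have hvars : d.vars = ∅ := (Finset.disjoint_self_iff_empty _).1 <|
    Finset.disjoint_of_subset_left (vars_subset i hp hdp) <|
      Finset.disjoint_of_subset_right (vars_subset j hq hdq) (Finset.disjoint_singleton.2 hij)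
  rw [vars_eq_empty_iff_eq_C] at hvars
  have hd : d ≠ 0 := ne_zero_of_dvd_ne_zero
    ((map_ne_zero_iff _ (Polynomial.toMvPolynomial_injective i)).2 hp) hdp
  rw [hvars] at hd ⊢
  exact (isUnit_iff_ne_zero.2 ((map_ne_zero_iff _ (C_injective σ F)).1 hd)).map C

theorem exists_monic_toMvPolynomial_mem {σ : Type*} [Finite σ]
    (m : Ideal (MvPolynomial σ F)) [m.IsMaximal] (i : σ) :
    ∃ p : Polynomial F, p.Monic ∧ p.toMvPolynomial i ∈ m := by
  let _ : Field (MvPolynomial σ F ⧸ m) := Ideal.Quotient.field m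
  -- The Nullstellensatz: the residue field is finite over `F`.
  have : Module.Finite F (MvPolynomial σ F ⧸ m) := finite_of_finite_type_of_isJacobsonRing _ _
  obtain ⟨p, hp, hpx⟩ := Algebra.IsIntegral.isIntegral (R := F) (Ideal.Quotient.mk m (X i))
  refine ⟨p, hp, Ideal.Quotient.eq_zero_iff_mem.1 ?_⟩
  rw [← Ideal.Quotient.mkₐ_eq_mk F, Polynomial.toMvPolynomial, ← Polynomial.aeval_algHom_apply]
  exact hpx

theorem not_isMaximal_span_singleton {σ : Type*} [Finite σ] [Nontrivial σ]
    (f : MvPolynomial σ F) : ¬ (Ideal.span {f}).IsMaximal := by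
  intro hmax
  obtain ⟨i, j, hij⟩ := exists_pair_ne σ
  obtain ⟨p, hp, hpf⟩ := exists_monic_toMvPolynomial_mem (Ideal.span {f}) i
  obtain ⟨q, hq, hqf⟩ := exists_monic_toMvPolynomial_mem (Ideal.span {f}) j
  rw [Ideal.mem_span_singleton] at hpf hqf
  exact hmax.ne_top <| Ideal.span_singleton_eq_top.2 <|
    isRelPrime_toMvPolynomial hij hp.ne_zero hq.ne_zero hpf hqf

variable {n : ℕ}

theorem colon_map_rename_succ_le (m : Ideal (MvPolynomial (Fin (n + 1)) F)) [m.IsMaximal]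
    (K : Ideal (MvPolynomial (Fin n) F)) :
    (K.map (rename (R := F) Fin.succ)).colon (m : Set (MvPolynomial (Fin (n + 1)) F)) ≤
      K.map (rename (R := F) Fin.succ) := by
  obtain ⟨p, hp, hpm⟩ := exists_monic_toMvPolynomial_mem m 0
  exact colon_le_of_isSMulRegular hpm (isSMulRegular_quotient_map_rename_succ K hp)

theorem colon_span_toMvPolynomial_sup_le (m : Ideal (MvPolynomial (Fin (n + 1)) F))
    [m.IsMaximal] (i j : Fin n) (p q : Polynomial F) :
    (Ideal.span {p.toMvPolynomial i.succ} ⊔ Ideal.span {q.toMvPolynomial j.succ}).colon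
        (m : Set (MvPolynomial (Fin (n + 1)) F)) ≤
      Ideal.span {p.toMvPolynomial i.succ} ⊔ Ideal.span {q.toMvPolynomial j.succ} := by
  have hmap : (Ideal.span {p.toMvPolynomial i, q.toMvPolynomial j}).map (rename (R := F) Fin.succ) =
      Ideal.span {p.toMvPolynomial i.succ} ⊔ Ideal.span {q.toMvPolynomial j.succ} := by
    rw [Ideal.map_span, Set.image_pair, rename_toMvPolynomial, rename_toMvPolynomial,
      Ideal.span_insert]
  rw [← hmap]
  exact colon_map_rename_succ_le m _

theorem colon_span_sup_span_le {f h : MvPolynomial (Fin (n + 3)) F} (hf : Prime f) (hfh : ¬ f ∣ h)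
    (m : Ideal (MvPolynomial (Fin (n + 3)) F)) [m.IsMaximal] :
    (Ideal.span {f} ⊔ Ideal.span {h}).colon (m : Set (MvPolynomial (Fin (n + 3)) F)) ≤
      Ideal.span {f} ⊔ Ideal.span {h} := by
  obtain ⟨i, j, hij, p, q, hp, hq, hpm, hqm, hfp⟩ :
      ∃ i j : Fin (n + 2), i ≠ j ∧ ∃ p q : Polynomial F, p ≠ 0 ∧ q ≠ 0 ∧
        p.toMvPolynomial i.succ ∈ m ∧ q.toMvPolynomial j.succ ∈ m ∧
        ¬ f ∣ p.toMvPolynomial i.succ := by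
    obtain ⟨p, hp, hpm⟩ := exists_monic_toMvPolynomial_mem m (Fin.succ 0)
    obtain ⟨q, hq, hqm⟩ := exists_monic_toMvPolynomial_mem m (Fin.succ 1)
    by_cases hfp : f ∣ p.toMvPolynomial (Fin.succ 0)
    · refine ⟨1, 0, one_ne_zero, q, p, hq.ne_zero, hp.ne_zero, hqm, hpm, fun hfq => ?_⟩
      exact hf.not_isUnit (isRelPrime_toMvPolynomial ((Fin.succ_injective _).ne zero_ne_one)
        hp.ne_zero hq.ne_zero hfp hfq)
    · exact ⟨0, 1, zero_ne_one, p, q, hp.ne_zero, hq.ne_zero, hpm, hqm, hfp⟩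
  have hrel {e : MvPolynomial (Fin (n + 3)) F} (he : ¬ f ∣ e) : IsRelPrime f e :=
    hf.irreducible.isRelPrime_iff_not_dvd.2 he
  have hpq : IsRelPrime (p.toMvPolynomial i.succ) (q.toMvPolynomial j.succ) :=
    isRelPrime_toMvPolynomial ((Fin.succ_injective _).ne hij) hp hq
  -- Exchange `h` for `p(xᵢ) ∈ m`, and then `f` for `q(xⱼ) ∈ m`.
  refine colon_sup_span_singleton_le hpm (isSMulRegular_quotient_span_singleton (hrel hfh))
    (isSMulRegular_quotient_span_singleton (hrel hfp)) ?_
  rw [sup_comm]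
  refine colon_sup_span_singleton_le hqm (isSMulRegular_quotient_span_singleton (hrel hfp).symm)
    (isSMulRegular_quotient_span_singleton hpq) ?_
  exact colon_span_toMvPolynomial_sup_le m i j p q

end PolynomialRing

section Hypersurface

variable {F R : Type*} [Field F] [CommRing R] {n : ℕ}

theorem krullDimLE_of_ker_eq_span_singleton {f : MvPolynomial (Fin (n + 1)) F} (hf : f ≠ 0)
    {φ : MvPolynomial (Fin (n + 1)) F →+* R} (hφ : Function.Surjective φ)
    (hker : RingHom.ker φ = Ideal.span {f}) : Ring.KrullDimLE n R := by
  have : Ring.KrullDimLE (n + 1) (MvPolynomial (Fin (n + 1)) F) := by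
    rw [Ring.krullDimLE_iff, MvPolynomial.ringKrullDim_of_isNoetherianRing,
      ringKrullDim_eq_zero_of_field]
    simp
  have := krullDimLE_quotient_span_singleton (n := n) (mem_nonZeroDivisors_of_ne_zero hf)
  rw [← hker] at this
  exact krullDimLE_of_surjective _ (RingHom.quotientKerEquivOfSurjective hφ).surjective

theorem not_isField_of_ker_eq_span_singleton {σ : Type*} [Finite σ] [Nontrivial σ]
    {f : MvPolynomial σ F} {φ : MvPolynomial σ F →+* R} (hφ : Function.Surjective φ)
    (hker : RingHom.ker φ = Ideal.span {f}) : ¬ IsField R := by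
  intro hR
  let _ := hR.toField
  exact not_isMaximal_span_singleton f (hker ▸ RingHom.ker_isMaximal_of_surjective φ hφ)

theorem notMem_associatedPrimes_of_isMaximal {f : MvPolynomial (Fin (n + 3)) F} (hf : Prime f)
    {φ : MvPolynomial (Fin (n + 3)) F →+* R} (hφ : Function.Surjective φ)
    (hker : RingHom.ker φ = Ideal.span {f}) {a : R} (ha : a ≠ 0) (m : Ideal R) [m.IsMaximal] :
    m ∉ associatedPrimes R (R ⧸ Ideal.span {a}) := by
  have : IsNoetherianRing R := isNoetherianRing_of_surjective _ _ φ hφ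
  obtain ⟨h, rfl⟩ := hφ a
  have hfh : ¬ f ∣ h := by rwa [← Ideal.mem_span_singleton, ← hker, RingHom.mem_ker]
  have hcomap : (Ideal.span {φ h}).comap φ = Ideal.span {f} ⊔ Ideal.span {h} := by
    rw [← hker, RingHom.ker_eq_comap_bot, sup_comm, ← Ideal.comap_map_of_surjective _ hφ,
      Ideal.map_span, Set.image_singleton]
  have : (m.comap φ).IsMaximal := Ideal.comap_isMaximal_of_surjective _ hφ
  refine notMem_associatedPrimes_of_colon_le fun u hu => ?_
  obtain ⟨u, rfl⟩ := hφ u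
  rw [← Ideal.mem_comap, hcomap]
  refine colon_span_sup_span_le hf hfh (m.comap φ) (Submodule.mem_colon.2 fun t ht => ?_)
  rw [← hcomap, Ideal.mem_comap, smul_eq_mul, map_mul]
  exact Submodule.mem_colon.1 hu (φ t) ht

end Hypersurface

section ChangeOfCoordinates

variable {R : Type*} [CommRing R]

theorem span_range_apply_le {ι κ : Type*} [Finite ι] (ψ : (ι → R) →ₗ[R] (κ → R)) (g : ι → R) :
    Ideal.span (Set.range (ψ g)) ≤ Ideal.span (Set.range g) := by
  classical
  have := Fintype.ofFinite ι
  rw [Ideal.span_le]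
  rintro _ ⟨k, rfl⟩
  have hk : ψ g k = ∑ i, g i * ψ (Pi.single i 1) k := by
    conv_lhs => rw [pi_eq_sum_univ' g]
    simp
  rw [hk]
  exact Ideal.sum_mem _ fun i _ => Ideal.mul_mem_right _ _ (Ideal.subset_span ⟨i, rfl⟩)

theorem span_range_linearEquiv {ι κ : Type*} [Finite ι] [Finite κ] (ψ : (ι → R) ≃ₗ[R] (κ → R))
    (g : ι → R) : Ideal.span (Set.range (ψ g)) = Ideal.span (Set.range g) := by
  refine (span_range_apply_le ψ.toLinearMap g).antisymm ?_
  simpa using span_range_apply_le ψ.symm.toLinearMap (ψ g)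

theorem exists_linearEquiv_isSMulRegular [IsNoetherianRing R]
    (hR : ∀ a : R, a ≠ 0 → ∀ m : Ideal R, m.IsMaximal → m ∉ associatedPrimes R (R ⧸ Ideal.span {a}))
    {g : Fin 3 → R} (hg : g ≠ 0) (hfin : IsFiniteLength R (R ⧸ Ideal.span (Set.range g))) :
    ∃ ψ : (Fin 3 → R) ≃ₗ[R] (Fin 3 → R),
      ψ g 0 ≠ 0 ∧ IsSMulRegular (R ⧸ Ideal.span {ψ g 0}) (ψ g 1) := by
  obtain ⟨i, hi⟩ := Function.ne_iff.1 hg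
  let π : (Fin 3 → R) ≃ₗ[R] (Fin 3 → R) := LinearEquiv.funCongrLeft R R (Equiv.swap 0 i)
  have hπ : π g 0 = g i := congrArg g (Equiv.swap_apply_left 0 i)
  have hassoc : ∀ q ∈ associatedPrimes R (R ⧸ Ideal.span {π g 0}), π g 1 ∈ q → π g 2 ∉ q := by
    intro q hq h1 h2
    have h0 : π g 0 ∈ q := by
      have hle := IsAssociatedPrime.annihilator_le hq
      rw [Submodule.annihilator_top, Ideal.annihilator_quotient] at hle
      exact hle (Ideal.mem_span_singleton_self _)
    have hle : Ideal.span (Set.range g) ≤ q := by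
      rw [← span_range_linearEquiv π, Ideal.span_le, Set.range_subset_iff, Fin.forall_fin_succ,
        Fin.forall_fin_two]
      exact ⟨h0, h1, h2⟩
    have := hq.isPrime
    exact hR _ (hπ ▸ hi) q (isMaximal_of_isFiniteLength_quotient hfin hle) hq
  obtain ⟨t, ht⟩ := exists_isSMulRegular_add_mul _ hassoc
  have hv : (t • LinearMap.proj 2 : Module.Dual R (Fin 3 → R)) (Pi.single 1 1) = 0 := by simp
  let ψ := π.trans (LinearEquiv.transvection hv)
  have hψ (j : Fin 3) : ψ g j = π g j + t * π g 2 * (Pi.single 1 1 : Fin 3 → R) j := rfl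
  have hψ0 : ψ g 0 = π g 0 := by simp [hψ]
  have hψ1 : ψ g 1 = π g 1 + t * π g 2 := by simp [hψ]
  exact ⟨ψ, hψ0 ▸ hπ ▸ hi, by rwa [hψ0, hψ1]⟩

end ChangeOfCoordinates

section Koszul

open Matrix

variable {R : Type*} [CommRing R] (g : Fin 3 → R)

/-- The `2`-cocycles of the Koszul complex `R → R³ → R³ → R` of `g`, whose differentials are
`· • g`, `g ⨯₃ ·` and `g ⬝ᵥ ·`. -/
def koszulCocycles : Submodule R (Fin 3 → R) := LinearMap.ker (dotProductEquiv R (Fin 3) g)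

/-- The `2`-coboundaries of the Koszul complex of `g`. -/
def koszulCoboundaries : Submodule R (Fin 3 → R) := LinearMap.range (crossProduct g)

/-- The second cohomology of the Koszul complex of `g`. -/
abbrev KoszulH2 : Type _ :=
  koszulCocycles g ⧸ (koszulCoboundaries g).submoduleOf (koszulCocycles g)

variable {g}

theorem mem_koszulCocycles {v : Fin 3 → R} : v ∈ koszulCocycles g ↔ g ⬝ᵥ v = 0 := Iff.rfl

theorem mem_koszulCoboundaries {v : Fin 3 → R} :
    v ∈ koszulCoboundaries g ↔ ∃ w, g ⨯₃ w = v := Iff.rfl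

theorem koszulCoboundaries_le_koszulCocycles : koszulCoboundaries g ≤ koszulCocycles g := by
  rintro _ ⟨w, rfl⟩
  exact dot_self_cross g w

theorem smul_mem_koszulCoboundaries {v : Fin 3 → R} (hv : v ∈ koszulCocycles g) (i : Fin 3) :
    g i • v ∈ koszulCoboundaries g := by
  refine mem_koszulCoboundaries.2 ⟨v ⨯₃ Pi.single i 1, ?_⟩
  rw [cross_cross_eq_smul_sub_smul', dotProduct_comm v g, mem_koszulCocycles.1 hv, zero_smul,
    sub_zero, dotProduct_single_one]

theorem torsion_quotient_koszulCoboundaries {i : Fin 3} (hi : g i ∈ nonZeroDivisors R) :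
    Submodule.torsion R ((Fin 3 → R) ⧸ koszulCoboundaries g) =
      (koszulCocycles g).map (koszulCoboundaries g).mkQ := by
  ext x
  constructor
  · intro hx
    obtain ⟨⟨a, ha⟩, hax⟩ := (Submodule.mem_torsion_iff _).1 hx
    obtain ⟨v, rfl⟩ := (koszulCoboundaries g).mkQ_surjective x
    have hav : a • v ∈ koszulCocycles g :=
      koszulCoboundaries_le_koszulCocycles ((Submodule.Quotient.mk_eq_zero _).1 hax)
    rw [mem_koszulCocycles, dotProduct_smul, smul_eq_mul,
      mul_left_mem_nonZeroDivisors_eq_zero_iff ha] at hav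
    exact ⟨v, hav, rfl⟩
  · rintro ⟨v, hv, rfl⟩
    exact (Submodule.mem_torsion_iff _).2
      ⟨⟨g i, hi⟩, (Submodule.Quotient.mk_eq_zero _).2 (smul_mem_koszulCoboundaries hv i)⟩

/-- The torsion of the cokernel of `g ⨯₃ ·` is the second Koszul cohomology, via the inclusion of
the cocycles into `R³`. -/
noncomputable def torsionEquivKoszulH2 {i : Fin 3} (hi : g i ∈ nonZeroDivisors R) :
    Submodule.torsion R ((Fin 3 → R) ⧸ koszulCoboundaries g) ≃ₗ[R] KoszulH2 g :=
  let q := (koszulCoboundaries g).mkQ.domRestrict (koszulCocycles g)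
  have hker : LinearMap.ker q = (koszulCoboundaries g).submoduleOf (koszulCocycles g) := by
    rw [LinearMap.ker_domRestrict, Submodule.ker_mkQ, Submodule.submoduleOf]
  have hrange : LinearMap.range q = Submodule.torsion R ((Fin 3 → R) ⧸ koszulCoboundaries g) := by
    rw [LinearMap.range_domRestrict, torsion_quotient_koszulCoboundaries hi]
  ((Submodule.quotEquivOfEq _ _ hker.symm).trans
    (q.quotKerEquivRange.trans (LinearEquiv.ofEq _ _ hrange))).symm

theorem exists_eq_smul_of_cross_eq_zero (ha : g 0 ∈ nonZeroDivisors R)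
    (hb : IsSMulRegular (R ⧸ Ideal.span {g 0}) (g 1)) {v : Fin 3 → R} (h : g ⨯₃ v = 0) :
    ∃ u : R, v = u • g := by
  rw [cross_apply] at h
  have h₁ : g 2 * v 0 - g 0 * v 2 = 0 := congrFun h 1
  have h₂ : g 0 * v 1 - g 1 * v 0 = 0 := congrFun h 2
  obtain ⟨u, hu⟩ := Ideal.mem_span_singleton'.1 <|
    mem_of_isSMulRegular_quotient_of_smul_mem hb (x := v 0) <|
      Ideal.mem_span_singleton'.2 ⟨v 1, by rw [smul_eq_mul]; linear_combination h₂⟩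
  refine ⟨u, funext fun j => (mul_cancel_left_mem_nonZeroDivisors ha).1 ?_⟩
  rw [Pi.smul_apply, smul_eq_mul]
  match j with
  | 0 => linear_combination -(g 0 * hu)
  | 1 => linear_combination h₂ - g 1 * hu
  | 2 => linear_combination -h₁ - g 2 * hu

theorem mem_koszulCoboundaries_iff_mem_span_pair (ha : g 0 ∈ nonZeroDivisors R)
    (hb : IsSMulRegular (R ⧸ Ideal.span {g 0}) (g 1)) {v : Fin 3 → R} (hv : v ∈ koszulCocycles g) :
    v ∈ koszulCoboundaries g ↔ v 2 ∈ Ideal.span {g 0, g 1} := by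
  rw [mem_koszulCocycles, dotProduct, Fin.sum_univ_three] at hv
  rw [mem_koszulCoboundaries, Ideal.mem_span_pair]
  constructor
  · rintro ⟨w, rfl⟩
    exact ⟨w 1, -w 0, by rw [cross_apply]; simp; ring⟩
  · rintro ⟨s, r, hsr⟩
    obtain ⟨u, hu⟩ := Ideal.mem_span_singleton'.1 <|
      mem_of_isSMulRegular_quotient_of_smul_mem hb (x := v 1 + r * g 2) <|
        Ideal.mem_span_singleton'.2 ⟨-(v 0 + s * g 2), by
          rw [smul_eq_mul]; linear_combination -hv - g 2 * hsr⟩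
    have hv₀ : v 0 = -(u * g 1) - s * g 2 := (mul_cancel_left_mem_nonZeroDivisors ha).1 <| by
      linear_combination hv + g 2 * hsr + g 1 * hu
    refine ⟨![-r, s, -u], ?_⟩
    rw [cross_apply]
    ext j
    fin_cases j
    · simp; linear_combination -hv₀
    · simp; linear_combination hu
    · simp; linear_combination hsr

theorem exists_mem_koszulCocycles_apply_two_eq {x : R} :
    (∃ v ∈ koszulCocycles g, v 2 = x) ↔ g 2 * x ∈ Ideal.span {g 0, g 1} := by
  simp only [mem_koszulCocycles, dotProduct, Fin.sum_univ_three, Ideal.mem_span_pair]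
  constructor
  · rintro ⟨v, hv, rfl⟩
    exact ⟨-v 0, -v 1, by linear_combination -hv⟩
  · rintro ⟨s, r, hsr⟩
    exact ⟨![-s, -r, x], by simp; linear_combination -hsr, rfl⟩

/-- When `g 0, g 1` is a regular sequence, `v ↦ v 2` identifies the second Koszul cohomology with
the kernel of `g 2` on `R ⧸ (g 0, g 1)`. -/
noncomputable def koszulH2EquivKer (ha : g 0 ∈ nonZeroDivisors R)
    (hb : IsSMulRegular (R ⧸ Ideal.span {g 0}) (g 1)) :
    KoszulH2 g ≃ₗ[R] LinearMap.ker (LinearMap.lsmul R (R ⧸ Ideal.span {g 0, g 1}) (g 2)) :=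
  let I := Ideal.span {g 0, g 1}
  let ρ := (I.mkQ ∘ₗ LinearMap.proj 2).domRestrict (koszulCocycles g)
  have hker : LinearMap.ker ρ = (koszulCoboundaries g).submoduleOf (koszulCocycles g) := by
    ext ⟨v, hv⟩
    exact (Submodule.Quotient.mk_eq_zero I).trans
      (mem_koszulCoboundaries_iff_mem_span_pair ha hb hv).symm
  have hrange : LinearMap.range ρ = LinearMap.ker (LinearMap.lsmul R (R ⧸ I) (g 2)) := by
    ext x
    obtain ⟨x, rfl⟩ := I.mkQ_surjective x
    have hx : I.mkQ x ∈ LinearMap.ker (LinearMap.lsmul R (R ⧸ I) (g 2)) ↔ g 2 * x ∈ I :=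
      Submodule.Quotient.mk_eq_zero I
    rw [hx]
    constructor
    · rintro ⟨⟨v, hv⟩, hvx⟩
      have hvI := exists_mem_koszulCocycles_apply_two_eq.1 ⟨v, hv, rfl⟩
      have hsub : v 2 - x ∈ I := (Submodule.Quotient.eq I).1 hvx
      have := I.sub_mem hvI (I.mul_mem_left (g 2) hsub)
      rwa [mul_sub, sub_sub_cancel] at this
    · intro h
      obtain ⟨v, hv, rfl⟩ := exists_mem_koszulCocycles_apply_two_eq.2 h
      exact ⟨⟨v, hv⟩, rfl⟩
  (Submodule.quotEquivOfEq _ _ hker.symm).trans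
    (ρ.quotKerEquivRange.trans (LinearEquiv.ofEq _ _ hrange))

theorem length_ker_eq_length_quotient_range {M : Type*} [AddCommGroup M] [Module R M]
    (hM : IsFiniteLength R M) (φ : M →ₗ[R] M) :
    Module.length R (LinearMap.ker φ) = Module.length R (M ⧸ LinearMap.range φ) := by
  have hker := Module.length_eq_add_of_exact (LinearMap.ker φ).subtype φ.rangeRestrict
    (Submodule.injective_subtype _) φ.surjective_rangeRestrict (by
      rw [LinearMap.exact_iff, LinearMap.ker_rangeRestrict, Submodule.range_subtype])
  have hcoker := Module.length_eq_add_of_exact (LinearMap.range φ).subtype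
    (LinearMap.range φ).mkQ (Submodule.injective_subtype _) (Submodule.mkQ_surjective _)
    (LinearMap.exact_subtype_mkQ _)
  have hne : Module.length R (LinearMap.range φ) ≠ ⊤ := fun h =>
    Module.length_ne_top_iff.2 hM (by rw [hcoker, h, top_add])
  rw [hker, add_comm] at hcoker
  exact ENat.add_right_injective_of_ne_top hne hcoker

/-- The cokernel of `c` on `R ⧸ I` is `R ⧸ (I + (c))`. -/
noncomputable def quotientRangeLsmulEquiv (I : Ideal R) (c : R) :
    ((R ⧸ I) ⧸ LinearMap.range (LinearMap.lsmul R (R ⧸ I) c)) ≃ₗ[R] R ⧸ (I ⊔ Ideal.span {c}) :=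
  have hrange : LinearMap.range (LinearMap.lsmul R (R ⧸ I) c) =
      Submodule.map I.mkQ (I ⊔ Ideal.span {c}) := by
    rw [Submodule.map_sup, Submodule.mkQ_map_self, bot_sup_eq]
    ext x
    constructor
    · rintro ⟨y, rfl⟩
      obtain ⟨y, rfl⟩ := I.mkQ_surjective y
      exact ⟨c * y, Ideal.mem_span_singleton.2 (dvd_mul_right c y), rfl⟩
    · rintro ⟨_, hx, rfl⟩
      obtain ⟨y, rfl⟩ := Ideal.mem_span_singleton.1 hx
      exact ⟨I.mkQ y, rfl⟩
  (Submodule.quotEquivOfEq _ _ hrange).trans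
    (Submodule.quotientQuotientEquivQuotient I _ le_sup_left)

theorem length_koszulH2 (ha : g 0 ∈ nonZeroDivisors R)
    (hb : IsSMulRegular (R ⧸ Ideal.span {g 0}) (g 1))
    (hfin : IsFiniteLength R (R ⧸ Ideal.span {g 0, g 1})) :
    Module.length R (KoszulH2 g) = Module.length R (R ⧸ Ideal.span (Set.range g)) := by
  have hspan : Ideal.span {g 0, g 1} ⊔ Ideal.span {g 2} = Ideal.span (Set.range g) := by
    rw [sup_comm, ← Ideal.span_union]
    congr 1
    ext x
    simp [Fin.exists_fin_succ, eq_comm]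
  rw [(koszulH2EquivKer ha hb).length_eq, length_ker_eq_length_quotient_range hfin,
    (quotientRangeLsmulEquiv _ _).length_eq, hspan]

end Koszul

section Kaehler

open KaehlerDifferential TensorProduct

theorem ker_mapBaseChange_eq_span_singleton {k A B : Type*} [CommRing k] [CommRing A] [CommRing B]
    [Algebra k A] [Algebra k B] [Algebra A B] [IsScalarTower k A B]
    (hB : Function.Surjective (algebraMap A B)) {f : A}
    (hker : RingHom.ker (algebraMap A B) = Ideal.span {f}) :
    LinearMap.ker (mapBaseChange k A B) = B ∙ (1 ⊗ₜ[A] D k A f : B ⊗[A] Ω[A⁄k]) := by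
  have hf : algebraMap A B f = 0 := by
    rw [← RingHom.mem_ker, hker]
    exact Ideal.mem_span_singleton_self f
  apply le_antisymm
  · intro x hx
    obtain ⟨y, rfl⟩ := (exact_kerCotangentToTensor_mapBaseChange k A B hB x).1 hx
    obtain ⟨⟨p, hp⟩, rfl⟩ := Ideal.toCotangent_surjective _ y
    obtain ⟨q, rfl⟩ := Ideal.mem_span_singleton.1 (hker ▸ hp)
    refine Submodule.mem_span_singleton.2 ⟨algebraMap A B q, ?_⟩
    rw [kerCotangentToTensor_toCotangent, Derivation.leibniz, tmul_add, tmul_smul, tmul_smul,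
      ← algebraMap_smul B f, hf, zero_smul, zero_add, algebraMap_smul]
  · rw [Submodule.span_singleton_le_iff_mem, LinearMap.mem_ker, mapBaseChange_tmul, map_D, hf,
      map_zero, smul_zero]

variable {k σ R : Type*} [CommRing k] [Finite σ] [CommRing R] [Algebra k R]
  [Algebra (MvPolynomial σ k) R] [IsScalarTower k (MvPolynomial σ k) R]

variable (k σ R) in
/-- The map from the free module on the `dXᵢ` to the Kähler differentials of an algebra over the
polynomial ring. -/
noncomputable def kaehlerProjection : (σ → R) →ₗ[R] Ω[R⁄k] :=
  mapBaseChange k (MvPolynomial σ k) R ∘ₗ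
    ((mvPolynomialBasis k σ).baseChange R).equivFun.symm.toLinearMap

theorem kaehlerProjection_surjective (hR : Function.Surjective (algebraMap (MvPolynomial σ k) R)) :
    Function.Surjective (kaehlerProjection k σ R) :=
  (mapBaseChange_surjective k _ R hR).comp (LinearEquiv.surjective _)

theorem ker_kaehlerProjection (hR : Function.Surjective (algebraMap (MvPolynomial σ k) R))
    {f : MvPolynomial σ k}
    (hker : RingHom.ker (algebraMap (MvPolynomial σ k) R) = Ideal.span {f}) :
    LinearMap.ker (kaehlerProjection k σ R) =
      R ∙ fun i => algebraMap (MvPolynomial σ k) R (pderiv i f) := by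
  have hgrad : ((mvPolynomialBasis k σ).baseChange R).equivFun (1 ⊗ₜ D k _ f) =
      fun i => algebraMap (MvPolynomial σ k) R (pderiv i f) := by
    ext i
    rw [Module.Basis.equivFun_apply, Module.Basis.baseChange_repr_tmul,
      mvPolynomialBasis_repr_apply, Algebra.smul_def, mul_one]
  rw [kaehlerProjection, LinearMap.ker_comp, ker_mapBaseChange_eq_span_singleton hR hker,
    ← hgrad, ← LinearEquiv.coe_coe, Submodule.comap_equiv_eq_map_symm, LinearEquiv.symm_symm,
    Submodule.map_span, Set.image_singleton, LinearEquiv.coe_coe]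

end Kaehler

section ExteriorSquare

open Matrix

variable {R M N : Type*} [CommRing R] [AddCommGroup M] [Module R M] [AddCommGroup N] [Module R N]

variable (R M) in
/-- The wedge product `M × M → ⋀²M` as a bilinear map. -/
noncomputable def wedge : M →ₗ[R] M →ₗ[R] ⋀[R]^2 M :=
  LinearMap.mk₂ R (fun x y => exteriorPower.ιMulti R 2 ![x, y])
    (fun x x' y => by ext; simp [ExteriorAlgebra.ιMulti_apply, add_mul])
    (fun c x y => by ext; simp [ExteriorAlgebra.ιMulti_apply])
    (fun x y y' => by ext; simp [ExteriorAlgebra.ιMulti_apply, mul_add])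
    (fun c x y => by ext; simp [ExteriorAlgebra.ιMulti_apply])

theorem wedge_apply (x y : M) : wedge R M x y = exteriorPower.ιMulti R 2 ![x, y] := rfl

theorem wedge_isAlt : (wedge R M).IsAlt := fun x => by
  ext; simp [wedge_apply, ExteriorAlgebra.ιMulti_apply]

/-- The linear map `⋀²M → N` induced by an alternating bilinear map. -/
noncomputable def wedgeLift (B : M →ₗ[R] M →ₗ[R] N) (hB : B.IsAlt) : ⋀[R]^2 M →ₗ[R] N :=
  exteriorPower.alternatingMapLinearEquiv
    { toFun := fun v => B (v 0) (v 1)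
      map_update_add' := fun v i x y => by fin_cases i <;> simp
      map_update_smul' := fun v i c x => by fin_cases i <;> simp
      map_eq_zero_of_eq' := fun v i j h hij => by
        fin_cases i <;> fin_cases j <;> simp_all [hB.self_eq_zero] }

theorem wedgeLift_wedge (B : M →ₗ[R] M →ₗ[R] N) (hB : B.IsAlt) (x y : M) :
    wedgeLift B hB (wedge R M x y) = B x y := by
  rw [wedgeLift, wedge_apply, exteriorPower.alternatingMapLinearEquiv_apply_ιMulti]
  rfl

theorem exteriorSquare_ext {φ ψ : ⋀[R]^2 M →ₗ[R] N}
    (h : ∀ x y, φ (wedge R M x y) = ψ (wedge R M x y)) : φ = ψ := by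
  refine exteriorPower.linearMap_ext (AlternatingMap.ext fun v => ?_)
  have hv : v = ![v 0, v 1] := by ext i; fin_cases i <;> rfl
  rw [hv]
  exact h _ _

/-- A linear equivalence induces one of exterior powers. -/
noncomputable def exteriorPowerCongr (n : ℕ) (E : M ≃ₗ[R] N) : ⋀[R]^n M ≃ₗ[R] ⋀[R]^n N :=
  LinearEquiv.ofLinearMap (exteriorPower.map n E.toLinearMap)
    (exteriorPower.map n E.symm.toLinearMap)
    (by rw [← exteriorPower.map_comp, LinearEquiv.comp_symm, exteriorPower.map_id])
    (by rw [← exteriorPower.map_comp, LinearEquiv.symm_comp, exteriorPower.map_id])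

/-- The linear map `R³ → ⋀²M` sending `a ⨯₃ b` to `π a ∧ π b`. -/
noncomputable def crossToWedge (π : (Fin 3 → R) →ₗ[R] M) : (Fin 3 → R) →ₗ[R] ⋀[R]^2 M :=
  Fintype.linearCombination R fun i =>
    wedge R M (π (Pi.single (i + 1) 1)) (π (Pi.single (i + 2) 1))

theorem crossToWedge_cross (π : (Fin 3 → R) →ₗ[R] M) (a b : Fin 3 → R) :
    crossToWedge π (a ⨯₃ b) = wedge R M (π a) (π b) := by
  suffices h : crossProduct.compr₂ (crossToWedge π) = (wedge R M).compl₁₂ π π from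
    LinearMap.congr_fun₂ h a b
  refine LinearMap.pi_ext' fun i => LinearMap.ext_ring <| LinearMap.pi_ext' fun j =>
    LinearMap.ext_ring ?_
  fin_cases i <;> fin_cases j <;>
    simp [crossToWedge, Fintype.linearCombination_apply, Fin.sum_univ_three, cross_apply,
      wedge_isAlt.self_eq_zero, wedge_isAlt.neg]

theorem single_one_eq_cross (i : Fin 3) :
    (Pi.single i 1 : Fin 3 → R) = Pi.single (i + 1) 1 ⨯₃ Pi.single (i + 2) 1 := by
  ext j
  fin_cases i <;> fin_cases j <;> simp [cross_apply]

variable {g : Fin 3 → R}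

variable (g) in
/-- The cross product on `R³ / (g)`, with values in the cokernel of `g ⨯₃ ·`. -/
noncomputable def crossQuotient :
    ((Fin 3 → R) ⧸ (R ∙ g)) →ₗ[R] ((Fin 3 → R) ⧸ (R ∙ g)) →ₗ[R]
      ((Fin 3 → R) ⧸ koszulCoboundaries g) :=
  (crossProduct.compr₂ (koszulCoboundaries g).mkQ).liftQ₂ (R ∙ g) (R ∙ g)
    (by
      rw [Submodule.span_singleton_le_iff_mem, LinearMap.mem_ker]
      exact LinearMap.ext fun v =>
        (Submodule.Quotient.mk_eq_zero _).2 (mem_koszulCoboundaries.2 ⟨v, rfl⟩))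
    (by
      rw [Submodule.span_singleton_le_iff_mem, LinearMap.mem_ker]
      exact LinearMap.ext fun v => (Submodule.Quotient.mk_eq_zero _).2
        (mem_koszulCoboundaries.2 ⟨-v, by rw [map_neg, cross_anticomm]⟩))

theorem crossQuotient_mkQ (a b : Fin 3 → R) :
    crossQuotient g ((R ∙ g).mkQ a) ((R ∙ g).mkQ b) = (koszulCoboundaries g).mkQ (a ⨯₃ b) := rfl

theorem crossQuotient_isAlt : (crossQuotient g).IsAlt := fun x => by
  obtain ⟨a, rfl⟩ := (R ∙ g).mkQ_surjective x
  rw [crossQuotient_mkQ, cross_self, map_zero]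

theorem koszulCoboundaries_le_ker_crossToWedge {π : (Fin 3 → R) →ₗ[R] M} (hg : π g = 0) :
    koszulCoboundaries g ≤ LinearMap.ker (crossToWedge π) := by
  rintro _ ⟨w, rfl⟩
  rw [LinearMap.mem_ker, crossToWedge_cross, hg, map_zero, LinearMap.zero_apply]

/-- The exterior square of `R³ / (g)` is the cokernel of `g ⨯₃ ·`, with `a ∧ b` corresponding to
`a ⨯₃ b`. -/
noncomputable def exteriorSquareQuotientEquiv :
    ⋀[R]^2 ((Fin 3 → R) ⧸ (R ∙ g)) ≃ₗ[R] ((Fin 3 → R) ⧸ koszulCoboundaries g) :=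
  LinearEquiv.ofLinearMap (wedgeLift (crossQuotient g) crossQuotient_isAlt)
    ((koszulCoboundaries g).liftQ (crossToWedge (R ∙ g).mkQ)
      (koszulCoboundaries_le_ker_crossToWedge
        ((Submodule.Quotient.mk_eq_zero _).2 (Submodule.mem_span_singleton_self g))))
    (by
      refine Submodule.linearMap_qext _ (LinearMap.pi_ext' fun i => LinearMap.ext_ring ?_)
      simp only [LinearMap.comp_apply, LinearMap.single_apply, LinearMap.id_apply]
      rw [single_one_eq_cross i, Submodule.mkQ_apply, Submodule.liftQ_apply, crossToWedge_cross,
        wedgeLift_wedge, crossQuotient_mkQ, Submodule.mkQ_apply])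
    (by
      refine exteriorSquare_ext fun x y => ?_
      obtain ⟨a, rfl⟩ := (R ∙ g).mkQ_surjective x
      obtain ⟨b, rfl⟩ := (R ∙ g).mkQ_surjective y
      rw [LinearMap.comp_apply, wedgeLift_wedge, crossQuotient_mkQ, Submodule.mkQ_apply,
        Submodule.liftQ_apply, crossToWedge_cross, LinearMap.id_apply])

end ExteriorSquare

section Ext

open Matrix

universe u

variable {R : Type u} [CommRing R] (g : Fin 3 → R)

/-- The terms of the complex `0 → R → R³ → R³`, extended by zero. -/
noncomputable def koszulX : ℕ → ModuleCat.{u} R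
  | 0 => ModuleCat.of R (Fin 3 → R)
  | 1 => ModuleCat.of R (Fin 3 → R)
  | 2 => ModuleCat.of R R
  | _ + 3 => ModuleCat.of R PUnit

/-- The differentials `· • g : R → R³` and `· ⨯₃ g : R³ → R³`. The sign is chosen so that the
transpose of the latter is `g ⨯₃ ·`. -/
noncomputable def koszulD : ∀ n : ℕ, koszulX (R := R) (n + 1) ⟶ koszulX n
  | 0 => ModuleCat.ofHom (crossProduct.flip g)
  | 1 => ModuleCat.ofHom (LinearMap.toSpanSingleton R (Fin 3 → R) g)
  | _ + 2 => 0

theorem koszulD_comp : ∀ n : ℕ, koszulD g (n + 1) ≫ koszulD g n = 0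
  | 0 => by
    refine ModuleCat.hom_ext (LinearMap.ext_ring ?_)
    change crossProduct.flip g ((1 : R) • g) = (0 : Fin 3 → R)
    rw [one_smul, LinearMap.flip_apply, cross_self]
  | _ + 1 => Limits.zero_comp

/-- The Koszul complex of `g` truncated to `0 → R → R³ → R³`, in homological degrees `2, 1, 0`. -/
noncomputable def truncatedKoszulComplex : ChainComplex (ModuleCat.{u} R) ℕ :=
  ChainComplex.of koszulX (koszulD g) (koszulD_comp g)

instance projective_koszulX : ∀ n : ℕ, Projective (koszulX (R := R) n)
  | 0 => inferInstanceAs (Projective (ModuleCat.of R (Fin 3 → R)))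
  | 1 => inferInstanceAs (Projective (ModuleCat.of R (Fin 3 → R)))
  | 2 => inferInstanceAs (Projective (ModuleCat.of R R))
  | _ + 3 => inferInstanceAs (Projective (ModuleCat.of R PUnit))

theorem truncatedKoszulComplex_d (n : ℕ) : (truncatedKoszulComplex g).d (n + 1) n = koszulD g n :=
  ChainComplex.of_d ..

variable {g}

theorem range_crossProduct_flip : LinearMap.range (crossProduct.flip g) = koszulCoboundaries g := by
  rw [koszulCoboundaries, ← LinearMap.range_neg (crossProduct g)]
  exact congrArg LinearMap.range (LinearMap.ext fun w => (cross_anticomm g w).symm)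

theorem truncatedKoszulComplex_exactAt {i : Fin 3} (hi : g i ∈ nonZeroDivisors R)
    (hex : ∀ v, g ⨯₃ v = 0 → ∃ u : R, v = u • g) (n : ℕ) :
    (truncatedKoszulComplex g).ExactAt (n + 1) := by
  rw [HomologicalComplex.exactAt_iff' _ (n + 2) (n + 1) n (by simp) (by simp),
    ShortComplex.moduleCat_exact_iff]
  change ∀ x, ((truncatedKoszulComplex g).d (n + 1) n).hom x = 0 →
    ∃ y, ((truncatedKoszulComplex g).d (n + 1 + 1) (n + 1)).hom y = x
  rw [truncatedKoszulComplex_d, truncatedKoszulComplex_d]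
  match n with
  | 0 =>
    intro (x : Fin 3 → R) (hx : x ⨯₃ g = 0)
    obtain ⟨u, rfl⟩ := hex x (by rw [← cross_anticomm, hx, neg_zero])
    exact ⟨u, rfl⟩
  | 1 =>
    intro (x : R) (hx : x • g = 0)
    have hx : x = 0 := (mul_right_mem_nonZeroDivisors_eq_zero_iff hi).1 (congrFun hx i)
    exact ⟨0, by rw [map_zero]; exact hx.symm⟩
  | n + 2 => exact fun x _ => ⟨0, Subsingleton.elim (α := PUnit) _ _⟩

/-- A truncated Koszul complex that is exact in degree one resolves the cokernel of `g ⨯₃ ·`. -/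
noncomputable def koszulResolution {i : Fin 3} (hi : g i ∈ nonZeroDivisors R)
    (hex : ∀ v, g ⨯₃ v = 0 → ∃ u : R, v = u • g) {N : ModuleCat.{u} R}
    {p : (Fin 3 → R) →ₗ[R] N} (hp : Function.Surjective p)
    (hker : LinearMap.ker p = koszulCoboundaries g) : ProjectiveResolution N :=
  have hd : ((truncatedKoszulComplex g).d 1 0).hom = crossProduct.flip g := by
    rw [truncatedKoszulComplex_d]; rfl
  have hexact : Function.Exact (crossProduct.flip g) p := by
    rw [LinearMap.exact_iff, hker, range_crossProduct_flip]
  { complex := truncatedKoszulComplex g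
    projective := projective_koszulX
    π := (ChainComplex.toSingle₀Equiv _ _).symm ⟨ModuleCat.ofHom p, by
      exact ModuleCat.hom_ext ((congrArg (p ∘ₗ ·) hd).trans hexact.linearMap_comp_eq_zero)⟩
    quasiIso := ⟨fun n => by
      cases n with
      | zero =>
        rw [ChainComplex.quasiIsoAt₀_iff, ShortComplex.quasiIso_iff_of_zeros' _ rfl rfl rfl]
        refine ⟨(ShortComplex.ShortExact.moduleCat_exact_iff_function_exact _).2 ?_,
          (ModuleCat.epi_iff_surjective _).2 hp⟩
        change Function.Exact ((truncatedKoszulComplex g).d 1 0).hom p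
        rwa [hd]
      | succ n =>
        rw [quasiIsoAt_iff_exactAt' (hL := ChainComplex.exactAt_succ_single_obj _ _)]
        exact truncatedKoszulComplex_exactAt hi hex n⟩ }

variable (g) in
/-- The end `R³ → R³ → R` of the Koszul complex, whose homology is `KoszulH2 g`. -/
noncomputable def koszulShortComplex : ShortComplex (ModuleCat.{u} R) :=
  ShortComplex.mk (ModuleCat.ofHom (crossProduct g))
    (ModuleCat.ofHom (dotProductEquiv R (Fin 3) g)) (by
      ext1
      exact LinearMap.ext fun w => dot_self_cross g w)

/-- The self-duality of `R³` given by the dot product. -/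
noncomputable def homPiIso : ModuleCat.of R (ModuleCat.of R (Fin 3 → R) ⟶ ModuleCat.of R R) ≅
    ModuleCat.of R (Fin 3 → R) :=
  (ModuleCat.homLinearEquiv (S := R).trans (dotProductEquiv R (Fin 3)).symm).toModuleIso

/-- The self-duality of `R` given by evaluation at `1`. -/
noncomputable def homRingIso : ModuleCat.of R (ModuleCat.of R R ⟶ ModuleCat.of R R) ≅
    ModuleCat.of R R :=
  (ModuleCat.homLinearEquiv (S := R).trans (LinearMap.ringLmapEquivSelf R R R)).toModuleIso

variable (g) in
/-- The self-duality of the Koszul complex: the dual of its truncation is its other end. -/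
noncomputable def koszulDualIso :
    ((truncatedKoszulComplex g).linearYonedaObj R (ModuleCat.of R R)).sc' 0 1 2 ≅
      koszulShortComplex g :=
  ShortComplex.isoMk homPiIso homPiIso homRingIso
    (by
      refine ModuleCat.hom_ext (LinearMap.ext fun (φ : ModuleCat.of R (Fin 3 → R) ⟶ _) => ?_)
      obtain ⟨v, hv⟩ := (dotProductEquiv R (Fin 3)).surjective φ.hom
      refine (LinearEquiv.eq_symm_apply (dotProductEquiv R (Fin 3))).2
        (LinearMap.ext fun (w : Fin 3 → R) => Eq.trans ?_
          (congrArg (fun d => (d ≫ φ).hom w) (truncatedKoszulComplex_d g 0)).symm)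
      change (g ⨯₃ (dotProductEquiv R (Fin 3)).symm φ.hom) ⬝ᵥ w = φ.hom (w ⨯₃ g)
      rw [← hv, LinearEquiv.symm_apply_apply]
      change (g ⨯₃ v) ⬝ᵥ w = v ⬝ᵥ w ⨯₃ g
      rw [dotProduct_comm, triple_product_permutation, triple_product_permutation])
    (by
      refine ModuleCat.hom_ext (LinearMap.ext fun (φ : ModuleCat.of R (Fin 3 → R) ⟶ _) => ?_)
      obtain ⟨v, hv⟩ := (dotProductEquiv R (Fin 3)).surjective φ.hom
      refine Eq.trans ?_
        (congrArg (fun d => (d ≫ φ).hom (1 : R)) (truncatedKoszulComplex_d g 1)).symm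
      change g ⬝ᵥ (dotProductEquiv R (Fin 3)).symm φ.hom = φ.hom ((1 : R) • g)
      rw [← hv, LinearEquiv.symm_apply_apply]
      change g ⬝ᵥ v = v ⬝ᵥ ((1 : R) • g)
      rw [one_smul, dotProduct_comm])

/-- The categorical homology of the end of the Koszul complex is the concrete quotient
`KoszulH2 g`. -/
noncomputable def koszulShortComplexHomologyEquiv :
    (koszulShortComplex g).homology ≃ₗ[R] KoszulH2 g :=
  (koszulShortComplex g).moduleCatHomologyIso.toLinearEquiv.trans
    (Submodule.quotEquivOfEq _ _ (by
      ext ⟨v, hv⟩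
      exact exists_congr fun w => Subtype.ext_iff))

/-- `Ext¹` of the cokernel of `g ⨯₃ ·` is the second Koszul cohomology of `g`, by the self-duality
of the Koszul complex. -/
noncomputable def extEquivKoszulH2 {i : Fin 3} (hi : g i ∈ nonZeroDivisors R)
    (hex : ∀ v, g ⨯₃ v = 0 → ∃ u : R, v = u • g) {N : ModuleCat.{u} R}
    (E : N ≃ₗ[R] (Fin 3 → R) ⧸ koszulCoboundaries g) :
    (((Ext R (ModuleCat.{u} R) 1).obj (op N)).obj (ModuleCat.of R R)) ≃ₗ[R] KoszulH2 g :=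
  let p := E.symm.toLinearMap ∘ₗ (koszulCoboundaries g).mkQ
  have hp : Function.Surjective p := E.symm.surjective.comp (koszulCoboundaries g).mkQ_surjective
  have hker : LinearMap.ker p = koszulCoboundaries g := by
    rw [LinearEquiv.ker_comp, Submodule.ker_mkQ]
  ((koszulResolution hi hex hp hker).isoExt 1 (ModuleCat.of R R) ≪≫
    ShortComplex.homologyMapIso (HomologicalComplex.isoSc' _ 0 1 2 (by simp) (by simp) ≪≫
      koszulDualIso g)).toLinearEquiv.trans koszulShortComplexHomologyEquiv

end Ext

section HypersurfaceDifferentials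

universe u

theorem ne_bot_of_isFiniteLength_quotient {R : Type*} [CommRing R] [IsDomain R]
    (hR : ¬ IsField R) {J : Ideal R} (hJ : IsFiniteLength R (R ⧸ J)) : J ≠ ⊥ := by
  rintro rfl
  exact hR (Ring.isField_iff_maximal_bot.2 (isMaximal_of_isFiniteLength_quotient hJ le_rfl))

theorem exists_linearEquiv_isSMulRegular_of_ker_eq_span_singleton {F R : Type*} [Field F]
    [CommRing R] {f : MvPolynomial (Fin 3) F} (hf : Prime f) {φ : MvPolynomial (Fin 3) F →+* R}
    (hφ : Function.Surjective φ) (hker : RingHom.ker φ = Ideal.span {f})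
    {g : Fin 3 → R} (hfin : IsFiniteLength R (R ⧸ Ideal.span (Set.range g))) :
    ∃ ψ : (Fin 3 → R) ≃ₗ[R] (Fin 3 → R), ψ g 0 ∈ nonZeroDivisors R ∧
      IsSMulRegular (R ⧸ Ideal.span {ψ g 0}) (ψ g 1) ∧
      IsFiniteLength R (R ⧸ Ideal.span {ψ g 0, ψ g 1}) := by
  have : IsNoetherianRing R := isNoetherianRing_of_surjective _ _ _ hφ
  have : Ring.KrullDimLE 2 R := krullDimLE_of_ker_eq_span_singleton hf.ne_zero hφ hker
  have : (RingHom.ker φ).IsPrime :=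
    hker ▸ (Ideal.span_singleton_prime hf.ne_zero).2 hf
  have : IsDomain R :=
    (RingHom.quotientKerEquivOfSurjective hφ).symm.toMulEquiv.isDomain _
  have hg : g ≠ 0 := by
    rintro rfl
    exact ne_bot_of_isFiniteLength_quotient (not_isField_of_ker_eq_span_singleton hφ hker) hfin
      (Ideal.span_eq_bot.2 fun _ ⟨_, h⟩ => h.symm)
  obtain ⟨ψ, ha, hb⟩ := exists_linearEquiv_isSMulRegular
    (fun a ha m _ => notMem_associatedPrimes_of_isMaximal hf hφ hker ha m) hg hfin
  have ha := mem_nonZeroDivisors_of_ne_zero ha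
  exact ⟨ψ, ha, hb, isFiniteLength_quotient_span_pair ha hb⟩

/-- A linear equivalence restricts to the torsion submodules. -/
noncomputable def torsionCongr {R M N : Type*} [CommRing R] [AddCommGroup M]
    [Module R M] [AddCommGroup N] [Module R N] (E : M ≃ₗ[R] N) :
    Submodule.torsion R M ≃ₗ[R] Submodule.torsion R N :=
  E.ofSubmodules _ _ <| by
    ext y
    obtain ⟨x, rfl⟩ := E.surjective y
    rw [Submodule.mem_map_equiv, LinearEquiv.symm_apply_apply, Submodule.mem_torsion_iff,
      Submodule.mem_torsion_iff]
    refine exists_congr fun a => ?_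
    change (a : R) • x = 0 ↔ (a : R) • E x = 0
    rw [← map_smul, E.map_eq_zero_iff]

variable {F : Type*} {R : Type u} [Field F] [CommRing R] [Algebra F R]
  [Algebra (MvPolynomial (Fin 3) F) R] [IsScalarTower F (MvPolynomial (Fin 3) F) R]
  {f : MvPolynomial (Fin 3) F}

/-- The exterior square of the Kähler differentials of a hypersurface, in the coordinates `ψ`
on `R³`. -/
noncomputable def exteriorSquareKaehlerEquiv
    (hsurj : Function.Surjective (algebraMap (MvPolynomial (Fin 3) F) R))
    (hker : RingHom.ker (algebraMap (MvPolynomial (Fin 3) F) R) = Ideal.span {f})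
    (ψ : (Fin 3 → R) ≃ₗ[R] (Fin 3 → R)) :
    ⋀[R]^2 (Ω[R⁄F]) ≃ₗ[R] ((Fin 3 → R) ⧸ koszulCoboundaries
      (ψ fun i => algebraMap (MvPolynomial (Fin 3) F) R (pderiv i f))) :=
  let π := kaehlerProjection F (Fin 3) R ∘ₗ ψ.symm.toLinearMap
  have hπ : Function.Surjective π :=
    (kaehlerProjection_surjective hsurj).comp ψ.symm.surjective
  have hkerπ : LinearMap.ker π =
      R ∙ ψ fun i => algebraMap (MvPolynomial (Fin 3) F) R (pderiv i f) := by
    rw [LinearMap.ker_comp, ker_kaehlerProjection hsurj hker, Submodule.comap_equiv_eq_map_symm,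
      LinearEquiv.symm_symm, Submodule.map_span, Set.image_singleton]
    rfl
  (exteriorPowerCongr 2 ((Submodule.quotEquivOfEq _ _ hkerπ.symm).trans
    (π.quotKerEquivOfSurjective hπ))).symm.trans exteriorSquareQuotientEquiv

theorem exists_torsion_ext_equiv_koszulH2 (hf : Prime f)
    (hsurj : Function.Surjective (algebraMap (MvPolynomial (Fin 3) F) R))
    (hker : RingHom.ker (algebraMap (MvPolynomial (Fin 3) F) R) = Ideal.span {f})
    {J : Ideal R}
    (hJ : J = Ideal.span (Set.range fun i => algebraMap (MvPolynomial (Fin 3) F) R (pderiv i f)))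
    (hfin : IsFiniteLength R (R ⧸ J)) :
    ∃ g : Fin 3 → R,
      Nonempty (Submodule.torsion R (⋀[R]^2 (Ω[R⁄F])) ≃ₗ[R] KoszulH2 g) ∧
      Nonempty ((((Ext R (ModuleCat R) 1).obj (op (ModuleCat.of R (⋀[R]^2 (Ω[R⁄F]))))).obj
        (ModuleCat.of R R)) ≃ₗ[R] KoszulH2 g) ∧
      Module.length R (KoszulH2 g) = Module.length R (R ⧸ J) := by
  subst hJ
  obtain ⟨ψ, ha, hb, hab⟩ :=
    exists_linearEquiv_isSMulRegular_of_ker_eq_span_singleton hf hsurj hker hfin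
  let E := exteriorSquareKaehlerEquiv hsurj hker ψ
  exact ⟨ψ _, ⟨(torsionCongr E).trans (torsionEquivKoszulH2 ha)⟩,
    ⟨extEquivKoszulH2 ha (fun _ => exists_eq_smul_of_cross_eq_zero ha hb) E⟩,
    by rw [length_koszulH2 ha hb hab, span_range_linearEquiv]⟩

end HypersurfaceDifferentials

theorem moduleLength_eq_coe_length (R M : Type) [CommRing R] [AddCommGroup M] [Module R M] :
    moduleLength R M = (Module.length R M : WithBot ℕ∞) :=
  (Module.coe_length R M).symm

theorem torsion_omega2_iso_ext1_general {F : Type*} [Field F]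
    {f : MvPolynomial (Fin 3) F} (hf : Prime f)
    {R : Type*} [CommRing R] (e : (MvPolynomial (Fin 3) F ⧸ Ideal.span {f}) ≃+* R)
    [Algebra F R] (halg : ∀ c : F, algebraMap F R c = e (algebraMap F _ c))
    {J : Ideal R}
    (hJ : J = Ideal.span {e (Ideal.Quotient.mk _ (pderiv 0 f)),
      e (Ideal.Quotient.mk _ (pderiv 1 f)), e (Ideal.Quotient.mk _ (pderiv 2 f))})
    (hisolated : IsFiniteLength R (R ⧸ J)) :
    Nonempty
      ((Submodule.torsion R (⋀[R]^2 (Ω[R⁄F]) : Submodule R _)) ≃ₗ[R]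
        (((Ext R (ModuleCat R) 1).obj (op (ModuleCat.of R (⋀[R]^2 (Ω[R⁄F]))))).obj
          (ModuleCat.of R R))) ∧
    Module.length R (Submodule.torsion R (⋀[R]^2 (Ω[R⁄F]) : Submodule R _)) =
      Module.length R (R ⧸ J) ∧
    Module.length R
        (((Ext R (ModuleCat R) 1).obj (op (ModuleCat.of R (⋀[R]^2 (Ω[R⁄F]))))).obj
          (ModuleCat.of R R)) = Module.length R (R ⧸ J) := by
  let φ : MvPolynomial (Fin 3) F →+* R :=
    (e : _ →+* R).comp (Ideal.Quotient.mk (Ideal.span {f}))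
  have hφ : Function.Surjective φ := e.surjective.comp Ideal.Quotient.mk_surjective
  have hker : RingHom.ker φ = Ideal.span {f} := by
    rw [RingHom.ker_comp_of_injective _ e.injective, Ideal.mk_ker]
  let _ : Algebra (MvPolynomial (Fin 3) F) R := φ.toAlgebra
  have : IsScalarTower F (MvPolynomial (Fin 3) F) R := .of_algebraMap_eq halg
  have hgrad : J = Ideal.span (Set.range fun i => φ (pderiv i f)) := by
    rw [hJ]
    congr 1
    ext x
    simp [φ, Fin.exists_fin_succ, eq_comm]
  obtain ⟨g, ⟨T⟩, ⟨X⟩, hg⟩ := exists_torsion_ext_equiv_koszulH2 hf hφ hker hgrad hisolated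
  exact ⟨⟨T.trans X.symm⟩, T.length_eq.trans hg, X.length_eq.trans hg⟩

/-- Let `R = F[x,y,z]/(f)` be a 2-dimensional isolated hypersurface singularity over a
field `F` of characteristic zero, with Tjurina number `τ` (the length of `R ⧸ J`, where
`J` is the Jacobian ideal).  Then the torsion submodule of `Ω²_{R/F}` is isomorphic to
`Ext¹_R(Ω²_{R/F}, R)`, and both have length `τ`. -/
theorem torsion_omega2_iso_ext1 (F : Type) [Field F] [CharZero F]
    (f : MvPolynomial (Fin 3) F) (hf : Prime f)
    (R : Type) [CommRing R] (e : (MvPolynomial (Fin 3) F ⧸ Ideal.span {f}) ≃+* R)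
    [Algebra F R] (halg : ∀ c : F, algebraMap F R c = e (algebraMap F _ c))
    (J : Ideal R)
    (hJ : J = Ideal.span {e (Ideal.Quotient.mk _ (pderiv 0 f)),
      e (Ideal.Quotient.mk _ (pderiv 1 f)), e (Ideal.Quotient.mk _ (pderiv 2 f))})
    (hisolated : IsFiniteLength R (R ⧸ J)) :
    Nonempty
      ((Submodule.torsion R (⋀[R]^2 (Ω[R⁄F]) : Submodule R _)) ≃ₗ[R]
        (((Ext R (ModuleCat R) 1).obj (op (ModuleCat.of R (⋀[R]^2 (Ω[R⁄F]))))).obj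
          (ModuleCat.of R R))) ∧
    moduleLength R (Submodule.torsion R (⋀[R]^2 (Ω[R⁄F]) : Submodule R _)) =
      moduleLength R (R ⧸ J) ∧
    moduleLength R
        (((Ext R (ModuleCat R) 1).obj (op (ModuleCat.of R (⋀[R]^2 (Ω[R⁄F]))))).obj
          (ModuleCat.of R R)) = moduleLength R (R ⧸ J) := by
  simpa only [moduleLength_eq_coe_length, WithBot.coe_inj] using
    torsion_omega2_iso_ext1_general hf e halg hJ hisolated
end
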